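/- arXiv:0712.0667 — 3 statements merged into one kernel-verified Lean document; each statement's English description precedes it below -/
import Mathlib

section
/- Let Φ ∈ M be invertible and let z ∈ ℂ satisfy |z| < r_σ(Φ^{−1})^{−1} and τ(Φ^ν) = 0 for every integer ν ≤ −1. Then z·1 − Φ is invertible and logdet_τ(z·1 − Φ) = logdet_τ(Φ). -/
/-!
The path `Φ t = u - t z`, `t ∈ [0, 1]`, joins `u` to `u - z`. Since `|t z| < r_σ(u⁻¹)⁻¹`, each
`Φ t` is invertible and the Neumann series `(Φ t)⁻¹ = ∑ (t z)ⁿ u⁻ⁿ⁻¹` gives `τ((Φ t)⁻¹) = 0`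
(`isUnit_sub_and_apply_inverse_eq_zero`). With `B = Φ* Φ`, traciality and `τ(a*) = conj τ(a)` give
`τ(B⁻¹ B') = 2 Re τ(Φ' Φ⁻¹) = 0`, as `Φ'` is a scalar. So it remains to see that `τ(log B)` is
constant along a path of positive invertible elements with `τ(B⁻¹ B') = 0`
(`trace_log_eq_of_path`).

For that, choose `c > 0` with `‖1 - c B t‖ ≤ r < 1` for all `t`, and put `X = 1 - c B`. The partial
sums of `log (c B) = -∑ Xⁱ⁺¹ / (i + 1)` converge geometrically, uniformly in `t`. By traciality the
derivative of `∑_{i < n} τ(Xⁱ⁺¹) / (i + 1)` is `τ(∑_{i < n} Xⁱ X') = τ(Xⁿ B⁻¹ B')`, which is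
`O(rⁿ)`, so the mean value inequality and `n → ∞` give the claim. No differentiability of the
functional calculus is needed.
-/

open scoped ComplexOrder

noncomputable section

variable {A : Type*} [CStarAlgebra A]

/-- The logarithmic Fuglede–Kadison determinant of an (invertible) element `Φ` of a unital
C*-algebra with respect to a tracial positive linear functional `τ`:
`logdet_τ(Φ) = (1/2)·τ(log(Φ*Φ))`, using the continuous functional calculus. -/
noncomputable def logdetTr (τ : A →ₗ[ℂ] ℂ) (Φ : A) : ℝ :=
  (1 / 2) * (τ (cfc Real.log (star Φ * Φ))).re

/-- `det_τ(Φ) = exp(logdet_τ(Φ))`. -/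
noncomputable def detTr (τ : A →ₗ[ℂ] ℂ) (Φ : A) : ℝ :=
  Real.exp (logdetTr τ Φ)

/-- A positive functional is bounded and hermitian. -/
lemma exists_clm_of_pos (τ : A →ₗ[ℂ] ℂ) (hτpos : ∀ a : A, 0 ≤ τ (star a * a)) :
    ∃ T : A →L[ℂ] ℂ, (∀ a, T a = τ a) ∧ ∀ a, τ (star a) = star (τ a) := by
  let _ := CStarAlgebra.spectralOrder A
  have := CStarAlgebra.spectralOrderedRing A
  let f : A →ₚ[ℂ] ℂ := PositiveLinearMap.mk₀ τ (fun a ha => by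
    obtain ⟨b, rfl⟩ := CStarAlgebra.nonneg_iff_eq_star_mul_self.mp ha
    exact hτpos b)
  refine ⟨⟨τ, map_continuous f⟩, fun a => rfl, fun a => map_star f a⟩

/-- Under a trace, powers of a path differentiate as if the path commuted with its derivative. -/
lemma hasDerivAt_trace_pow (T : A →L[ℂ] ℂ) (htr : ∀ a b : A, T (a * b) = T (b * a))
    {X : ℝ → A} {X' : A} {t : ℝ} (hX : HasDerivAt X X' t) (i : ℕ) :
    HasDerivAt (fun s => T (((i : ℝ) + 1)⁻¹ • X s ^ (i + 1))) (T (X t ^ i * X')) t := by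
  have h := ((T.restrictScalars ℝ).hasFDerivAt.comp_hasDerivAt t
    ((hX.fun_pow' (i + 1)).const_smul ((i : ℝ) + 1)⁻¹))
  refine h.congr_deriv ?_
  have hterm : ∀ j ∈ Finset.range (i + 1),
      T (X t ^ ((i + 1).pred - j) * X' * X t ^ j) = T (X t ^ i * X') := by
    intro j hj
    rw [htr, ← mul_assoc, ← pow_add]
    congr 3
    have := Finset.mem_range.mp hj
    simp only [Nat.pred_eq_sub_one]
    omega
  have hi : ((i : ℂ) + 1) ≠ 0 := by exact_mod_cast Nat.succ_ne_zero i
  rw [map_smul]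
  simp only [ContinuousLinearMap.coe_restrictScalars', map_sum]
  rw [Finset.sum_congr rfl hterm]
  simp only [Finset.sum_const, Finset.card_range, nsmul_eq_mul, Complex.real_smul]
  push_cast
  field_simp

/-- Truncating the power series of `log (c • B) = log (1 - X)`, where `X = 1 - c • B` has norm
less than one, leaves a geometrically small error. -/
lemma norm_log_sub_partial_sum_le {B : A} (hB : IsSelfAdjoint B)
    {c r : ℝ} (hc : 0 < c) (hr : r < 1) (hX : ‖1 - c • B‖ ≤ r) (n : ℕ) :
    ‖cfc Real.log B + algebraMap ℝ A (Real.log c) +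
      ∑ i ∈ Finset.range n, ((i : ℝ) + 1)⁻¹ • (1 - c • B) ^ (i + 1)‖ ≤ r ^ (n + 1) / (1 - r) := by
  have hXc : cfc (fun x : ℝ => 1 - c * x) B = 1 - c • B := by
    rw [cfc_sub (fun _ : ℝ => (1 : ℝ)) (fun x => c * x) B, cfc_const_one ℝ B,
      cfc_const_mul_id c B]
  have hr0 : 0 ≤ r := (norm_nonneg _).trans hX
  have habs : ∀ x ∈ spectrum ℝ B, |1 - c * x| ≤ r := by
    intro x hx
    have := norm_apply_le_norm_cfc (fun x : ℝ => 1 - c * x) B hx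
    rw [hXc] at this
    exact this.trans hX
  have hpos : ∀ x ∈ spectrum ℝ B, 0 < x := by
    intro x hx
    have := (abs_le.mp (habs x hx)).2
    exact pos_of_mul_pos_right (by linarith : 0 < c * x) hc.le
  have hlog : ContinuousOn Real.log (spectrum ℝ B) :=
    Real.continuousOn_log.mono fun x hx => (hpos x hx).ne'
  have hsum : cfc (fun x : ℝ => ∑ i ∈ Finset.range n, ((i : ℝ) + 1)⁻¹ * (1 - c * x) ^ (i + 1)) B =
      ∑ i ∈ Finset.range n, ((i : ℝ) + 1)⁻¹ • (1 - c • B) ^ (i + 1) := by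
    have := cfc_sum (fun (i : ℕ) (x : ℝ) => ((i : ℝ) + 1)⁻¹ * (1 - c * x) ^ (i + 1)) B
      (Finset.range n) (fun i _ => by fun_prop)
    rw [← hXc]
    convert this using 2 with i
    · ext x; simp
    · rw [cfc_const_mul _ _ B, cfc_pow _ _ B]
  have hall : cfc Real.log B + algebraMap ℝ A (Real.log c) +
      ∑ i ∈ Finset.range n, ((i : ℝ) + 1)⁻¹ • (1 - c • B) ^ (i + 1) =
      cfc (fun x : ℝ => Real.log x + Real.log c +
        ∑ i ∈ Finset.range n, ((i : ℝ) + 1)⁻¹ * (1 - c * x) ^ (i + 1)) B := by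
    rw [cfc_add B (fun x : ℝ => Real.log x + Real.log c) _ (hlog.add continuousOn_const)
      (by fun_prop), hsum, cfc_add B Real.log (fun _ => Real.log c) hlog continuousOn_const,
      cfc_const _ B]
  rw [hall]
  refine norm_cfc_le (div_nonneg (by positivity) (by linarith)) fun x hx => ?_
  have hx1 := habs x hx
  have := Real.abs_log_sub_add_sum_range_le (hx1.trans_lt hr) n
  rw [sub_sub_cancel, Real.log_mul hc.ne' (hpos x hx).ne'] at this
  calc _ = |(∑ i ∈ Finset.range n, (1 - c * x) ^ (i + 1) / ((i : ℝ) + 1)) +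
        (Real.log c + Real.log x)| := by
        rw [Real.norm_eq_abs]
        congr 1
        simp only [div_eq_inv_mul]
        ring
    _ ≤ _ := this
    _ ≤ _ := by
        have : 0 < 1 - r := by linarith
        gcongr

lemma norm_one_sub_smul_lt_one {B : A} (hB : IsSelfAdjoint B)
    (hpos : ∀ x ∈ spectrum ℝ B, 0 < x) {c : ℝ} (hc : 0 < c) (hcB : c * ‖B‖ < 1) :
    ‖1 - c • B‖ < 1 := by
  have hXc : cfc (fun x : ℝ => 1 - c * x) B = 1 - c • B := by
    rw [cfc_sub (fun _ : ℝ => (1 : ℝ)) (fun x => c * x) B, cfc_const_one ℝ B,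
      cfc_const_mul_id c B]
  rw [← hXc]
  refine norm_cfc_lt one_pos fun x hx => ?_
  have h1 := norm_apply_le_norm_cfc (fun x : ℝ => x) B hx
  rw [cfc_id' ℝ B, Real.norm_eq_abs] at h1
  have h2 : c * x ≤ c * ‖B‖ := by gcongr; exact (le_abs_self x).trans h1
  have h3 : 0 < c * x := mul_pos hc (hpos x hx)
  rw [Real.norm_eq_abs, abs_lt]
  constructor <;> linarith

/-- Along a path of positive invertible elements on which the logarithmic derivative
`T (B⁻¹ * B')` vanishes, `T (log B)` is constant. -/
lemma trace_log_eq_of_path (T : A →L[ℂ] ℂ) (htr : ∀ a b : A, T (a * b) = T (b * a))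
    {B B' W : ℝ → A} (hB : ∀ t, HasDerivAt B (B' t) t) (hB' : Continuous B')
    (hW : ContinuousOn W (Set.Icc 0 1)) (hBW : ∀ t ∈ Set.Icc (0 : ℝ) 1, B t * W t = 1)
    (hsa : ∀ t, IsSelfAdjoint (B t))
    (hpos : ∀ t ∈ Set.Icc (0 : ℝ) 1, ∀ x ∈ spectrum ℝ (B t), 0 < x)
    (h0 : ∀ t ∈ Set.Icc (0 : ℝ) 1, T (W t * B' t) = 0) :
    T (cfc Real.log (B 1)) = T (cfc Real.log (B 0)) := by
  have hBc : Continuous B := continuous_iff_continuousAt.mpr fun t => (hB t).continuousAt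
  have hI : IsCompact (Set.Icc (0 : ℝ) 1) := isCompact_Icc
  have hI0 : (0 : ℝ) ∈ Set.Icc (0 : ℝ) 1 := by simp
  have hI1 : (1 : ℝ) ∈ Set.Icc (0 : ℝ) 1 := by simp
  obtain ⟨M, hM⟩ := hI.exists_bound_of_continuousOn hBc.continuousOn
  obtain ⟨K, hK⟩ := hI.exists_bound_of_continuousOn (hW.mul hB'.continuousOn)
  have hM0 : 0 ≤ M := (norm_nonneg _).trans (hM 0 hI0)
  have hK0 : 0 ≤ K := (norm_nonneg _).trans (hK 0 hI0)
  set c : ℝ := (M + 1)⁻¹ with hcdef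
  have hc : 0 < c := by positivity
  set X : ℝ → A := fun t => 1 - c • B t with hXdef
  have hXd : ∀ t, HasDerivAt X (-(c • B' t)) t := fun t => ((hB t).const_smul c).const_sub 1
  have hXlt : ∀ t ∈ Set.Icc (0 : ℝ) 1, ‖X t‖ < 1 := by
    intro t ht
    refine norm_one_sub_smul_lt_one (hsa t) (hpos t ht) hc ?_
    rw [hcdef, inv_mul_lt_one₀ (by positivity)]
    linarith [hM t ht]
  obtain ⟨t₀, ht₀, hmax⟩ := hI.exists_isMaxOn ⟨0, hI0⟩
    (continuous_norm.comp (continuous_const.sub (hBc.const_smul c) : Continuous X)).continuousOn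
  set r := ‖X t₀‖ with hrdef
  have hr : r < 1 := hXlt t₀ ht₀
  have hr0 : 0 ≤ r := norm_nonneg _
  have hXr : ∀ t ∈ Set.Icc (0 : ℝ) 1, ‖X t‖ ≤ r := fun t ht => hmax ht
  let S : ℕ → ℝ → A := fun n t => ∑ i ∈ Finset.range n, ((i : ℝ) + 1)⁻¹ • X t ^ (i + 1)
  have hSd : ∀ n t, HasDerivAt (fun s => T (S n s))
      (∑ i ∈ Finset.range n, T (X t ^ i * -(c • B' t))) t := by
    intro n t
    have := HasDerivAt.fun_sum (u := Finset.range n)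
      (fun i _ => hasDerivAt_trace_pow T htr (hXd t) i)
    simpa only [S, map_sum] using this
  have hSd' : ∀ n, ∀ t ∈ Set.Icc (0 : ℝ) 1,
      ‖∑ i ∈ Finset.range (n + 1), T (X t ^ i * -(c • B' t))‖ ≤ ‖T‖ * (r ^ (n + 1) * K) := by
    intro n t ht
    -- The geometric sum is `(1 - X ^ (n + 1)) * (c • B)⁻¹`, and the leading term has trace zero.
    have hgeom : (∑ i ∈ Finset.range (n + 1), X t ^ i) * (c • B t) = 1 - X t ^ (n + 1) := by
      have := geom_sum_mul_neg (X t) (n + 1)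
      simpa only [hXdef, sub_sub_cancel] using this
    have hgeom' : c • (∑ i ∈ Finset.range (n + 1), X t ^ i) = (1 - X t ^ (n + 1)) * W t := by
      rw [← hgeom, mul_assoc, smul_mul_assoc, hBW t ht, mul_smul_comm, mul_one]
    have : ∑ i ∈ Finset.range (n + 1), T (X t ^ i * -(c • B' t)) =
        T (X t ^ (n + 1) * (W t * B' t)) := by
      rw [← map_sum, ← Finset.sum_mul, mul_neg, mul_smul_comm, ← smul_mul_assoc, hgeom',
        mul_assoc, sub_mul, one_mul, neg_sub, map_sub, h0 t ht, sub_zero]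
    rw [this]
    refine (T.le_opNorm _).trans ?_
    gcongr
    refine (norm_mul_le _ _).trans ?_
    gcongr
    · refine (norm_pow_le' _ n.succ_pos).trans ?_
      gcongr
      exact hXr t ht
    · exact hK t ht
  have hS : ∀ n, ‖T (S (n + 1) 1) - T (S (n + 1) 0)‖ ≤ ‖T‖ * (r ^ (n + 1) * K) := fun n =>
    norm_image_sub_le_of_norm_deriv_le_segment_01' (fun t _ => (hSd (n + 1) t).hasDerivWithinAt)
      (fun t ht => hSd' n t (Set.Ico_subset_Icc_self ht))
  have hL : ∀ n, ∀ t ∈ Set.Icc (0 : ℝ) 1,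
      ‖T (cfc Real.log (B t) + algebraMap ℝ A (Real.log c) + S (n + 1) t)‖ ≤
        ‖T‖ * (r ^ (n + 2) / (1 - r)) := fun n t ht =>
    (T.le_opNorm _).trans (mul_le_mul_of_nonneg_left
      (norm_log_sub_partial_sum_le (hsa t) hc hr (hXr t ht) (n + 1)) (norm_nonneg _))
  have hbound : ∀ n : ℕ, ‖T (cfc Real.log (B 1)) - T (cfc Real.log (B 0))‖ ≤
      ‖T‖ * (r ^ (n + 2) / (1 - r)) + ‖T‖ * (r ^ (n + 2) / (1 - r)) +
        ‖T‖ * (r ^ (n + 1) * K) := by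
    intro n
    have e : T (cfc Real.log (B 1)) - T (cfc Real.log (B 0)) =
        T (cfc Real.log (B 1) + algebraMap ℝ A (Real.log c) + S (n + 1) 1) -
        T (cfc Real.log (B 0) + algebraMap ℝ A (Real.log c) + S (n + 1) 0) -
        (T (S (n + 1) 1) - T (S (n + 1) 0)) := by
      simp only [map_add]; ring
    rw [e]
    exact (norm_sub_le _ _).trans (add_le_add ((norm_sub_le _ _).trans
      (add_le_add (hL n 1 hI1) (hL n 0 hI0))) (hS n))
  have hr_lim := tendsto_pow_atTop_nhds_zero_of_lt_one hr0 hr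
  have hlim : Filter.Tendsto (fun n : ℕ => ‖T‖ * (r ^ (n + 2) / (1 - r)) +
      ‖T‖ * (r ^ (n + 2) / (1 - r)) + ‖T‖ * (r ^ (n + 1) * K)) Filter.atTop (nhds 0) := by
    have h1 := (Filter.tendsto_add_atTop_iff_nat 1).mpr hr_lim
    have h2 := (Filter.tendsto_add_atTop_iff_nat 2).mpr hr_lim
    have h3 := (h2.div_const (1 - r)).const_mul ‖T‖
    simpa using (h3.add h3).add ((h1.mul_const K).const_mul ‖T‖)
  have := ge_of_tendsto' hlim hbound
  exact sub_eq_zero.mp (norm_le_zero_iff.mp this)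

/-- For `‖z‖` less than `r_σ(u⁻¹)⁻¹`, the element `u - z` is invertible, and its inverse is killed
by any bounded functional vanishing on the negative powers of `u`, because of the Neumann series
`(u - z)⁻¹ = ∑ n, z ^ n • u⁻¹ ^ (n + 1)`. -/
lemma isUnit_sub_and_apply_inverse_eq_zero (T : A →L[ℂ] ℂ) (u : Aˣ) (z : ℂ)
    (hz : (‖z‖₊ : ENNReal) < (spectralRadius ℂ ((u⁻¹ : Aˣ) : A))⁻¹)
    (hν : ∀ n : ℕ, T (((u⁻¹ : Aˣ) : A) ^ (n + 1)) = 0) :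
    IsUnit ((u : A) - algebraMap ℂ A z) ∧ T (Ring.inverse ((u : A) - algebraMap ℂ A z)) = 0 := by
  have hunit := spectrum.isUnit_one_sub_smul_of_lt_inv_radius hz
  have hfac : (u : A) - algebraMap ℂ A z = (1 - z • ((u⁻¹ : Aˣ) : A)) * u := by
    rw [sub_mul, one_mul, smul_mul_assoc, Units.inv_mul, Algebra.algebraMap_eq_smul_one]
  -- Holomorphy extends the expansion from the disc of radius `‖u⁻¹‖⁻¹` to the disc of radius `ρ`.
  obtain ⟨ρ, hzρ, hρ⟩ := ENNReal.lt_iff_exists_nnreal_btwn.mp hz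
  have hρ0 : 0 < ρ := pos_of_gt (ENNReal.coe_lt_coe.mp hzρ)
  have hs := ((spectrum.hasFPowerSeriesOnBall_inverse_one_sub_smul ℂ
    ((u⁻¹ : Aˣ) : A)).exchange_radius ((spectrum.differentiableOn_inverse_one_sub_smul
      hρ).hasFPowerSeriesOnBall hρ0)).hasSum (y := z)
      (by rw [Metric.mem_eball, edist_zero_right]; exact hzρ)
  rw [zero_add] at hs
  refine ⟨hfac ▸ hunit.mul u.isUnit, ?_⟩
  obtain ⟨v, hv⟩ := hunit
  have hinv : Ring.inverse ((u : A) - algebraMap ℂ A z) =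
      ((u⁻¹ : Aˣ) : A) * Ring.inverse (1 - z • ((u⁻¹ : Aˣ) : A)) := by
    rw [hfac, ← hv, ← Units.val_mul, Ring.inverse_unit, Ring.inverse_unit, mul_inv_rev,
      Units.val_mul]
  rw [hinv]
  have hs' := (hs.mul_left ((u⁻¹ : Aˣ) : A)).mapL T
  refine hs'.unique ?_
  convert hasSum_zero with n
  simp [← pow_succ', hν]

/-- If `Φ` is invertible, `|z| < r_σ(Φ⁻¹)⁻¹` and `τ(Φ^ν) = 0` for all
`ν ≤ −1`, then `z·1 − Φ` is invertible and `logdet_τ(z·1 − Φ) = logdet_τ(Φ)`. -/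
theorem logdet_sub_of_lt_inv_spectralRadius_inv
    (τ : A →ₗ[ℂ] ℂ) (hτpos : ∀ a : A, 0 ≤ τ (star a * a))
    (hτtr : ∀ a b : A, τ (a * b) = τ (b * a))
    (u : Aˣ) (z : ℂ) (hz : (‖z‖₊ : ENNReal) < (spectralRadius ℂ ((u⁻¹ : Aˣ) : A))⁻¹)
    (hν : ∀ n : ℕ, τ (((u⁻¹ : Aˣ) : A) ^ (n + 1)) = 0) :
    IsUnit (algebraMap ℂ A z - (u : A)) ∧
      logdetTr τ (algebraMap ℂ A z - (u : A)) = logdetTr τ (u : A) := by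
  obtain ⟨T, hT, hstar⟩ := exists_clm_of_pos τ hτpos
  let b : A := -algebraMap ℂ A z
  let Φ : ℝ → A := fun t => u + t • b
  have hΦz : ∀ t : ℝ, Φ t = (u : A) - algebraMap ℂ A (t * z) := by
    intro t
    simp only [Φ, b, smul_neg, ← sub_eq_add_neg, map_mul]
    rw [← Complex.coe_algebraMap, ← IsScalarTower.algebraMap_apply, Algebra.smul_def]
  have hres : ∀ t ∈ Set.Icc (0 : ℝ) 1, IsUnit (Φ t) ∧ T (Ring.inverse (Φ t)) = 0 := by
    intro t ht
    rw [hΦz]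
    refine isUnit_sub_and_apply_inverse_eq_zero T u _ (lt_of_le_of_lt ?_ hz)
      (fun n => by rw [hT, hν])
    rw [ENNReal.coe_le_coe, ← NNReal.coe_le_coe, coe_nnnorm, coe_nnnorm, norm_mul,
      Complex.norm_real, Real.norm_of_nonneg ht.1]
    exact mul_le_of_le_one_left (norm_nonneg _) ht.2
  have hΦd : ∀ t, HasDerivAt Φ b t := fun t => by
    simpa only [id, one_smul] using ((hasDerivAt_id t).smul_const b).const_add (u : A)
  have hΦc : Continuous Φ := continuous_iff_continuousAt.mpr fun t => (hΦd t).continuousAt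
  let w : ℝ → A := fun t => Ring.inverse (Φ t)
  have hw : ContinuousOn w (Set.Icc 0 1) := by
    intro t ht
    obtain ⟨v, hv⟩ := (hres t ht).1
    have h1 : ContinuousAt Ring.inverse (Φ t) := hv ▸ NormedRing.inverse_continuousAt v
    exact (ContinuousAt.comp (f := Φ) h1 hΦc.continuousAt).continuousWithinAt
  have hΦw : ∀ t ∈ Set.Icc (0 : ℝ) 1, Φ t * w t = 1 := fun t ht =>
    Ring.mul_inverse_cancel _ (hres t ht).1
  have hwΦ : ∀ t ∈ Set.Icc (0 : ℝ) 1, w t * Φ t = 1 := fun t ht =>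
    Ring.inverse_mul_cancel _ (hres t ht).1
  have htr : ∀ a b : A, T (a * b) = T (b * a) := fun a b => by rw [hT, hT, hτtr]
  have hwb : ∀ t ∈ Set.Icc (0 : ℝ) 1, T (b * w t) = 0 := by
    intro t ht
    simp only [b, w, Algebra.algebraMap_eq_smul_one, neg_mul, smul_mul_assoc, one_mul, map_neg,
      map_smul, (hres t ht).2, smul_zero, neg_zero]
  have key := trace_log_eq_of_path T htr (B := fun t => star (Φ t) * Φ t)
    (B' := fun t => star b * Φ t + star (Φ t) * b) (W := fun t => w t * star (w t))
    (fun t => (hΦd t).star.mul (hΦd t)) (by fun_prop) (hw.mul hw.star)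
    (fun t ht => by
      rw [mul_assoc, ← mul_assoc (Φ t), hΦw t ht, one_mul, ← star_mul, hwΦ t ht, star_one])
    (fun t => IsSelfAdjoint.star_mul_self _)
    (fun t ht x hx => by
      let _ := CStarAlgebra.spectralOrder A
      have := CStarAlgebra.spectralOrderedRing A
      refine lt_of_le_of_ne (spectrum_nonneg_of_nonneg (star_mul_self_nonneg (Φ t)) hx) ?_
      rintro rfl
      exact spectrum.zero_notMem ℝ ((hres t ht).1.star.mul (hres t ht).1) hx)
    (fun t ht => by
      have e1 : T (w t * star (w t) * (star b * Φ t)) = star (T (b * w t)) := by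
        rw [hT (b * w t), ← hstar, ← hT, star_mul, ← mul_assoc, htr, mul_assoc (w t),
          ← mul_assoc (Φ t), hΦw t ht, one_mul]
      have e2 : T (w t * star (w t) * (star (Φ t) * b)) = T (b * w t) := by
        rw [mul_assoc, ← mul_assoc (star (w t)), ← star_mul, hΦw t ht, star_one, one_mul, htr]
      rw [mul_add, map_add, e1, e2, hwb t ht, star_zero, add_zero])
  have hΦ1 : algebraMap ℂ A z - u = -Φ 1 := by rw [hΦz]; simp
  have hΦ0 : Φ 0 = u := by simp [Φ]
  refine ⟨hΦ1 ▸ (hres 1 (by simp)).1.neg, ?_⟩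
  rw [hT, hT, hΦ0] at key
  rw [logdetTr, logdetTr, hΦ1, star_neg, neg_mul_neg, key]
end
end

section
/- Let Φ ∈ M be invertible with τ(Φ^ν) = 0 for every integer ν ≠ 0 and r_σ(Φ^{−1}) = r_σ(Φ)^{−1}. Then logdet_τ(Φ) = τ(1)·log r_σ(Φ), i.e. det_τ(Φ) = r_σ(Φ)^{τ(1)}. -/
/-!
Write `ℓ(x) = τ(log x)` for strictly positive `x`, so that `logdet Φ = ℓ(Φ*Φ) / 2`. The argument
rests on the multiplicativity `ℓ(Φ* p Φ) = ℓ(p) + ℓ(Φ*Φ)` for strictly positive `p`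
(`trace_log_conj`). Along a segment `x(t)` of strictly positive elements the trace property gives
`d/dt ℓ(x(t)) = τ(x(t)⁻¹ dx/dt)` (`hasDerivAt_trace_log`): near a given parameter one can choose a
scalar `c` with `‖1 - x(t)/c‖ < 1`, expand `log x(t)` as a power series in `1 - x(t)/c`, and
differentiate termwise. For the segment `p(t)` from `1` to `p`, the derivatives of `ℓ(Φ* p(t) Φ)`
and `ℓ(p(t))` are equal by traciality, so the difference of the two functions is constant.

Multiplicativity yields `logdet (Φⁿ) = n · logdet Φ` and `logdet (Φ⁻¹) = -logdet Φ`. Since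
`log x ≤ log ‖x‖`, positivity of `τ` gives `n · logdet Φ ≤ τ(1) · log ‖Φⁿ‖`, and Gelfand's formula
then gives `logdet Φ ≤ τ(1) · log r(Φ)` (`logdetTr_le`). The same inequality for `Φ⁻¹`, together
with `r(Φ⁻¹) = r(Φ)⁻¹`, is the reverse inequality.
-/

open scoped ComplexOrder

noncomputable section

variable {A : Type*} [CStarAlgebra A]

open Filter Topology Set in
/-- The expansion `log c - log x = ∑ (1 - x/c) ^ (n + 1) / (n + 1)` of the logarithm defined by
the functional calculus. The condition `‖1 - x/c‖ < 1` forces the spectrum of `x` to lie in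
`(0, 2c)`, so no positivity hypothesis is needed. -/
lemma hasSum_cfc_log [Nontrivial A] {x : A} (hx : IsSelfAdjoint x) {c : ℝ} (hc : 0 < c)
    (h : ‖1 - c⁻¹ • x‖ < 1) :
    HasSum (fun n : ℕ => ((n + 1 : ℝ)⁻¹) • (1 - c⁻¹ • x) ^ (n + 1))
      (Real.log c • (1 : A) - cfc Real.log x) := by
  set ρ := ‖1 - c⁻¹ • x‖ with hρ
  have hy : cfc (fun s : ℝ => 1 - c⁻¹ * s) x = 1 - c⁻¹ • x := by
    rw [cfc_sub (fun _ : ℝ => (1 : ℝ)) (fun s => c⁻¹ * s) x, cfc_const_one ℝ x,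
      cfc_const_mul_id c⁻¹ x]
  have hspec : ∀ s ∈ spectrum ℝ x, |1 - c⁻¹ * s| ≤ ρ := by
    intro s hs
    have := norm_apply_le_norm_cfc (fun s : ℝ => 1 - c⁻¹ * s) x hs
    rwa [hy, Real.norm_eq_abs] at this
  have hu : Summable (fun n : ℕ => ρ ^ (n + 1)) :=
    (summable_nat_add_iff 1).2 (summable_geometric_of_lt_one (norm_nonneg _) h)
  have hunif := tendstoUniformlyOn_tsum (s := spectrum ℝ x)
    (f := fun (n : ℕ) (s : ℝ) => (n + 1 : ℝ)⁻¹ * (1 - c⁻¹ * s) ^ (n + 1)) hu (by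
      intro n s hs
      rw [norm_mul, norm_pow, Real.norm_eq_abs, Real.norm_eq_abs]
      have h1 : |((n : ℝ) + 1)⁻¹| ≤ 1 := by
        rw [abs_of_nonneg (by positivity)]
        exact inv_le_one_of_one_le₀ (by linarith [(Nat.cast_nonneg n : (0 : ℝ) ≤ n)])
      calc _ ≤ 1 * ρ ^ (n + 1) := by gcongr; exact hspec s hs
        _ = _ := one_mul _)
  have hlim := tendsto_cfc_fun (a := x) hunif
    (Eventually.of_forall fun t => by fun_prop)
  have hpos : ∀ s ∈ spectrum ℝ x, s ≠ 0 := by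
    rintro s hs rfl
    have := hspec 0 hs
    simp at this
    linarith
  have hlog : cfc (fun s : ℝ => ∑' n : ℕ, (n + 1 : ℝ)⁻¹ * (1 - c⁻¹ * s) ^ (n + 1)) x
      = Real.log c • (1 : A) - cfc Real.log x := by
    have hcl : ContinuousOn Real.log (spectrum ℝ x) := Real.continuousOn_log.mono hpos
    rw [cfc_congr (g := fun s => Real.log c - Real.log s), cfc_sub (fun _ => Real.log c) Real.log x,
      cfc_const _ x, Algebra.algebraMap_eq_smul_one]
    intro s hs
    have h1 : |1 - c⁻¹ * s| < 1 := (hspec s hs).trans_lt h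
    have h2 := Real.hasSum_pow_div_log_of_abs_lt_one h1
    have h3 : Real.log (1 - (1 - c⁻¹ * s)) = Real.log s - Real.log c := by
      rw [sub_sub_cancel, Real.log_mul (by positivity) (hpos s hs), Real.log_inv]; ring
    rw [h3] at h2
    have h4 := h2.tsum_eq
    simp only [div_eq_inv_mul] at h4
    simp only [h4]
    ring
  rw [hlog] at hlim
  refine hlim.congr fun t => ?_
  have hfun : (fun s : ℝ => ∑ n ∈ t, (n + 1 : ℝ)⁻¹ * (1 - c⁻¹ * s) ^ (n + 1)) =
      ∑ n ∈ t, fun s : ℝ => (n + 1 : ℝ)⁻¹ * (1 - c⁻¹ * s) ^ (n + 1) := by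
    ext s; simp
  rw [hfun, cfc_sum _ _ _ (fun n _ => by fun_prop)]
  refine Finset.sum_congr rfl fun n _ => ?_
  rw [cfc_const_mul _ (fun s : ℝ => (1 - c⁻¹ * s) ^ (n + 1)) x,
    cfc_pow (fun s : ℝ => 1 - c⁻¹ * s) (n + 1) x, hy]

open Filter Topology Set in
/-- The derivative of `t ↦ τ(log x(t))` along `x(t) = a + t b` is `τ(x(t)⁻¹ b)`. Traciality merges
the `n + 1` summands of the noncommutative derivative of `(1 - x(t)/c) ^ (n + 1)`, so the termwise
derivatives form a geometric series with sum `x(t)⁻¹ b`. -/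
lemma hasDerivAt_trace_log [Nontrivial A] (L : A →L[ℝ] ℂ) (hL : ∀ a b : A, L (a * b) = L (b * a))
    {a b v : A} (ha : IsSelfAdjoint a) (hb : IsSelfAdjoint b) {c t₀ : ℝ} (hc : 0 < c)
    (h : ‖1 - c⁻¹ • (a + t₀ • b)‖ < 1) (hv : (a + t₀ • b) * v = 1) :
    HasDerivAt (fun t : ℝ => L (cfc Real.log (a + t • b))) (L (v * b)) t₀ := by
  set y : ℝ → A := fun t => 1 - c⁻¹ • (a + t • b) with hy
  have hyd : ∀ t, HasDerivAt y (-(c⁻¹ • b)) t := fun t => by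
    have := ((((hasDerivAt_id t).smul_const b).const_add a).const_smul c⁻¹).const_sub 1
    simpa only [id_eq, one_smul] using! this
  have hyc : Continuous y := by fun_prop
  obtain ⟨ρ, hρ1, hρ2⟩ := exists_between h
  have hρ0 : 0 ≤ ρ := (norm_nonneg _).trans hρ1.le
  obtain ⟨ε, hε, hball⟩ := Metric.isOpen_iff.1 (isOpen_lt hyc.norm continuous_const) t₀ hρ1
  have hsum : ∀ t ∈ Metric.ball t₀ ε,
      HasSum (fun n : ℕ => L (((n + 1 : ℝ)⁻¹) • y t ^ (n + 1)))
        (L (Real.log c • (1 : A)) - L (cfc Real.log (a + t • b))) := fun t ht => by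
    rw [← map_sub]
    exact (hasSum_cfc_log (ha.add ((IsSelfAdjoint.all t).smul hb)) hc
      (lt_trans (hball ht) hρ2)).mapL L
  have ht₀ : t₀ ∈ Metric.ball t₀ ε := Metric.mem_ball_self hε
  have hterm : ∀ (n : ℕ) (t : ℝ), HasDerivAt (fun t => L (((n + 1 : ℝ)⁻¹) • y t ^ (n + 1)))
      (-L (y t ^ n * (c⁻¹ • b))) t := fun n t => by
    have h1 := L.hasFDerivAt.comp_hasDerivAt t (((hyd t).fun_pow' (n + 1)).const_smul ((n + 1 : ℝ)⁻¹))
    refine h1.congr_deriv ?_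
    have h2 : ∀ i ∈ Finset.range (n + 1),
        L (y t ^ ((n + 1).pred - i) * -(c⁻¹ • b) * y t ^ i) = -L (y t ^ n * (c⁻¹ • b)) := by
      intro i hi
      have hi' : i + (n - i) = n := by have := Finset.mem_range.1 hi; omega
      rw [hL, ← mul_assoc, ← pow_add, Nat.pred_succ, hi', mul_neg, map_neg]
    rw [map_smul, map_sum, Finset.sum_congr rfl h2, Finset.sum_const, Finset.card_range,
      ← Nat.cast_smul_eq_nsmul ℝ, smul_smul]
    push_cast
    rw [inv_mul_cancel₀ (by positivity), one_smul]
  have hgeo : Summable fun n : ℕ => y t₀ ^ n := summable_geometric_of_norm_lt_one h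
  -- The factor `‖1‖ + 1 ≥ 1` makes one bound valid for `n = 0` and for `n > 0`.
  have hder := hasDerivAt_tsum_of_isPreconnected (u := fun n : ℕ => ‖L‖ * ((‖(1 : A)‖ + 1) * ρ ^ n * ‖c⁻¹ • b‖))
    (((summable_geometric_of_lt_one hρ0 hρ2).mul_left _ |>.mul_right _).mul_left _)
    Metric.isOpen_ball (convex_ball t₀ ε).isPreconnected (fun n t _ => hterm n t)
    (by
      intro n t ht
      have hlt : ‖y t‖ ≤ ρ := le_of_lt (hball ht)
      have hp : ‖y t ^ n‖ ≤ (‖(1 : A)‖ + 1) * ρ ^ n := by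
        rcases n with _ | n
        · simp
        · calc ‖y t ^ (n + 1)‖ ≤ ‖y t‖ ^ (n + 1) := norm_pow_le' _ n.succ_pos
            _ ≤ ρ ^ (n + 1) := by gcongr
            _ ≤ _ := le_mul_of_one_le_left (by positivity) (by linarith [norm_nonneg (1 : A)])
      rw [norm_neg]
      calc _ ≤ ‖L‖ * ‖y t ^ n * (c⁻¹ • b)‖ := L.le_opNorm _
        _ ≤ ‖L‖ * (‖y t ^ n‖ * ‖c⁻¹ • b‖) := by gcongr; exact norm_mul_le _ _
        _ ≤ _ := by gcongr)
    ht₀ (hsum t₀ ht₀).summable ht₀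
  have hS : (∑' n : ℕ, y t₀ ^ n) = c • v := by
    have h1 : (∑' n : ℕ, y t₀ ^ n) * (1 - y t₀) = 1 := geom_series_mul_neg _ h
    have h2 : (1 - y t₀) * (c • v) = 1 := by
      rw [hy]; simp only [sub_sub_cancel]
      rw [smul_mul_smul_comm, inv_mul_cancel₀ hc.ne', one_smul, hv]
    calc _ = (∑' n : ℕ, y t₀ ^ n) * ((1 - y t₀) * (c • v)) := by rw [h2, mul_one]
      _ = c • v := by rw [← mul_assoc, h1, one_mul]
  have hval : ∑' n : ℕ, -L (y t₀ ^ n * (c⁻¹ • b)) = -L (v * b) := by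
    rw [tsum_neg]
    have := ((hgeo.hasSum.mul_right (c⁻¹ • b)).mapL L).tsum_eq
    rw [this, hS, smul_mul_smul_comm, mul_inv_cancel₀ hc.ne', one_smul]
  rw [hval] at hder
  have hfin := hder.const_sub (L (Real.log c • (1 : A)))
  rw [neg_neg] at hfin
  refine hfin.congr_of_eventuallyEq ?_
  filter_upwards [Metric.isOpen_ball.mem_nhds ht₀] with t ht
  rw [(hsum t ht).tsum_eq, sub_sub_cancel]

/-- Any `c > ‖x‖` works, because the spectrum of `x` lies in `(0, ‖x‖]`. -/
lemma exists_scale_norm_lt [Nontrivial A] [PartialOrder A] [StarOrderedRing A] {x : A}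
    (hx : IsStrictlyPositive x) : ∃ c : ℝ, 0 < c ∧ ‖1 - c⁻¹ • x‖ < 1 := by
  have hsa := hx.isSelfAdjoint
  refine ⟨‖x‖ + 1, by positivity, ?_⟩
  have hy : cfc (fun s : ℝ => 1 - (‖x‖ + 1)⁻¹ * s) x = 1 - (‖x‖ + 1)⁻¹ • x := by
    rw [cfc_sub (fun _ : ℝ => (1 : ℝ)) (fun s => (‖x‖ + 1)⁻¹ * s) x, cfc_const_one ℝ x,
      cfc_const_mul_id _ x]
  rw [← hy]
  refine norm_cfc_lt one_pos fun s hs => ?_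
  have h0 : 0 < s := hx.spectrum_pos hs
  have h1 : s ≤ ‖x‖ := (le_abs_self s).trans (spectrum.norm_le_norm_of_mem hs)
  have h2 : (‖x‖ + 1)⁻¹ * s < 1 := by
    rw [inv_mul_lt_one₀ (by positivity)]; linarith
  have h3 : 0 < (‖x‖ + 1)⁻¹ * s := by positivity
  rw [Real.norm_eq_abs, abs_lt]; constructor <;> linarith

open Set in
/-- Multiplicativity of the Fuglede–Kadison determinant, proved by differentiating along the
segment from `1` to `p`. -/
lemma trace_log_conj [Nontrivial A] [PartialOrder A] [StarOrderedRing A]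
    (L : A →L[ℝ] ℂ) (hL : ∀ a b : A, L (a * b) = L (b * a)) (u : Aˣ) {p : A}
    (hp : IsStrictlyPositive p) :
    L (cfc Real.log (star (u : A) * p * u)) =
      L (cfc Real.log p) + L (cfc Real.log (star (u : A) * u)) := by
  have hpt : ∀ t ∈ Icc (0 : ℝ) 1, IsStrictlyPositive (1 + t • (p - 1)) := by
    intro t ht
    have e : 1 + t • (p - 1) = (1 - t) • (1 : A) + t • p := by module
    rw [e]
    rcases ht.1.eq_or_lt with rfl | h0
    · simp
    · exact IsStrictlyPositive.nonneg_add (smul_nonneg (by linarith [ht.2]) zero_le_one)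
        (hp.smul h0)
  have hsp : IsSelfAdjoint (p - 1) := hp.isSelfAdjoint.sub (.one A)
  have hsu : IsSelfAdjoint (star (u : A) * u) := .star_mul_self _
  have hsup : IsSelfAdjoint (star (u : A) * (p - 1) * u) := hsp.conjugate' _
  have e : ∀ t : ℝ, star (u : A) * u + t • (star (u : A) * (p - 1) * u)
      = star (u : A) * (1 + t • (p - 1)) * u := fun t => by
    simp only [mul_add, add_mul, mul_one, mul_smul_comm, smul_mul_assoc]
  have hd : ∀ t ∈ Icc (0 : ℝ) 1, HasDerivAt (fun t : ℝ =>
      L (cfc Real.log (star (u : A) * u + t • (star (u : A) * (p - 1) * u)))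
        - L (cfc Real.log (1 + t • (p - 1)))) 0 t := by
    intro t ht
    obtain ⟨c, hc, hcn⟩ := exists_scale_norm_lt (hpt t ht)
    have hq : IsStrictlyPositive (star (u : A) * u + t • (star (u : A) * (p - 1) * u)) := by
      rw [e, u.isUnit.isStrictlyPositive_star_left_conjugate_iff]; exact hpt t ht
    obtain ⟨d, hd, hdn⟩ := exists_scale_norm_lt hq
    obtain ⟨w, hw⟩ := (hpt t ht).isUnit
    have h1 := hasDerivAt_trace_log L hL (.one A) hsp hc hcn (v := ↑w⁻¹) (by rw [← hw]; simp)
    have h2 := hasDerivAt_trace_log L hL hsu hsup hd hdn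
      (v := (↑u⁻¹ : A) * ↑w⁻¹ * star (↑u⁻¹ : A)) (by
        have : star (u : A) * star (↑u⁻¹ : A) = 1 := by rw [← star_mul]; simp
        rw [e, ← hw]; simp [mul_assoc, this])
    refine (h2.sub h1).congr_deriv ?_
    have h3 : (↑u⁻¹ : A) * ↑w⁻¹ * star (↑u⁻¹ : A) * (star (u : A) * (p - 1) * u)
        = ↑u⁻¹ * (↑w⁻¹ * (p - 1) * u) := by
      have : star (↑u⁻¹ : A) * star (u : A) = 1 := by rw [← star_mul]; simp
      simp only [mul_assoc]
      rw [← mul_assoc (star (↑u⁻¹ : A)), this, one_mul]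
    rw [h3, hL, mul_assoc, Units.mul_inv, mul_one, sub_self]
  have := constant_of_has_deriv_right_zero (a := (0 : ℝ)) (b := 1)
    (fun t ht => (hd t ht).continuousAt.continuousWithinAt)
    (fun t ht => (hd t ⟨ht.1, ht.2.le⟩).hasDerivWithinAt) 1 (by simp)
  simp only [e] at this
  simp at this
  linear_combination this

lemma trace_log_pow [Nontrivial A] [PartialOrder A] [StarOrderedRing A]
    (L : A →L[ℝ] ℂ) (hL : ∀ a b : A, L (a * b) = L (b * a)) (u : Aˣ) (n : ℕ) :
    L (cfc Real.log (star ((u : A) ^ n) * (u : A) ^ n)) =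
      n * L (cfc Real.log (star (u : A) * u)) := by
  induction n with
  | zero => simp
  | succ n ih =>
    have hp : IsStrictlyPositive (star ((u : A) ^ n) * (u : A) ^ n) :=
      IsUnit.isStrictlyPositive ((u.isUnit.pow n).star.mul (u.isUnit.pow n)) (star_mul_self_nonneg _)
    have := trace_log_conj L hL u hp
    rw [ih] at this
    rw [pow_succ, star_mul]
    simp only [mul_assoc] at this ⊢
    rw [this]; push_cast; ring

lemma trace_log_inv [Nontrivial A] [PartialOrder A] [StarOrderedRing A]
    (L : A →L[ℝ] ℂ) (hL : ∀ a b : A, L (a * b) = L (b * a)) (u : Aˣ) :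
    L (cfc Real.log (star (↑u⁻¹ : A) * (↑u⁻¹ : A))) =
      -L (cfc Real.log (star (u : A) * u)) := by
  have hp : IsStrictlyPositive (star (↑u⁻¹ : A) * (↑u⁻¹ : A)) :=
    IsUnit.isStrictlyPositive ((u⁻¹).isUnit.star.mul (u⁻¹).isUnit) (star_mul_self_nonneg _)
  have := trace_log_conj L hL u hp
  have h1 : star (u : A) * star (↑u⁻¹ : A) = 1 := by rw [← star_mul]; simp
  rw [← mul_assoc, h1] at this
  simp at this
  linear_combination -this

open Filter Topology in
/-- The upper bound of the determinant by the spectral radius. The map `L` is `τ` regarded as a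
continuous real-linear map. -/
lemma logdetTr_le [Nontrivial A] [PartialOrder A] [StarOrderedRing A]
    (τ : A →ₗ[ℂ] ℂ) (hτ : ∀ a : A, 0 ≤ a → 0 ≤ τ a) (L : A →L[ℝ] ℂ) (hLτ : ∀ a, L a = τ a)
    (hL : ∀ a b : A, L (a * b) = L (b * a)) (u : Aˣ)
    (h0 : spectralRadius ℂ (u : A) ≠ 0) (htop : spectralRadius ℂ (u : A) ≠ ⊤) :
    logdetTr τ (u : A) ≤ (τ 1).re * Real.log (spectralRadius ℂ (u : A)).toReal := by
  have hlim : Tendsto (fun n : ℕ => (τ 1).re * Real.log (‖(u : A) ^ n‖ ^ (1 / n : ℝ))) atTop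
      (𝓝 ((τ 1).re * Real.log (spectralRadius ℂ (u : A)).toReal)) := by
    have h1 := (ENNReal.tendsto_toReal htop).comp
      (spectrum.pow_norm_pow_one_div_tendsto_nhds_spectralRadius (u : A))
    have h2 : Tendsto (fun n : ℕ => ‖(u : A) ^ n‖ ^ (1 / n : ℝ)) atTop
        (𝓝 (spectralRadius ℂ (u : A)).toReal) :=
      h1.congr fun n => ENNReal.toReal_ofReal (by positivity)
    exact (h2.log (ENNReal.toReal_ne_zero.2 ⟨h0, htop⟩)).const_mul _
  refine ge_of_tendsto hlim ?_
  filter_upwards [eventually_gt_atTop 0] with n hn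
  set x := star ((u : A) ^ n) * (u : A) ^ n with hx
  have hp : IsStrictlyPositive x :=
    IsUnit.isStrictlyPositive ((u.isUnit.pow n).star.mul (u.isUnit.pow n)) (star_mul_self_nonneg _)
  have hsa := hp.isSelfAdjoint
  have hle : cfc Real.log x ≤ algebraMap ℝ A (Real.log ‖x‖) := by
    refine cfc_le_algebraMap _ _ _ (fun s hs => ?_) ?_
    · exact Real.log_le_log (hp.spectrum_pos hs)
        ((le_abs_self s).trans (spectrum.norm_le_norm_of_mem hs))
    · exact Real.continuousOn_log.mono fun s hs => (hp.spectrum_pos hs).ne'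
  have h1 := hτ _ (sub_nonneg.2 hle)
  rw [map_sub, ← hLτ (cfc _ _), trace_log_pow L hL u n, hLτ, Algebra.algebraMap_eq_smul_one,
    ← hLτ (_ • _), map_smul, hLτ] at h1
  have h2 := (Complex.le_def.1 h1).1
  have hnorm : ‖x‖ = ‖(u : A) ^ n‖ ^ 2 := by rw [hx, CStarRing.norm_star_mul_self, sq]
  have hupos : 0 < ‖(u : A) ^ n‖ := norm_pos_iff.2 (u.isUnit.pow n).ne_zero
  rw [hnorm, Real.log_pow] at h2
  rw [Real.log_rpow hupos, logdetTr]
  have hn' : (0 : ℝ) < n := by exact_mod_cast hn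
  simp at h2
  have h3 : (τ 1).re * (1 / (n : ℝ) * Real.log ‖(u : A) ^ n‖)
      = ((τ 1).re * Real.log ‖(u : A) ^ n‖) / n := by ring
  rw [h3, le_div_iff₀ hn']
  linarith

/-- If `Φ` is invertible with `τ(Φ^ν) = 0` for all `ν ≠ 0` and
`r_σ(Φ⁻¹) = r_σ(Φ)⁻¹`, then `logdet_τ(Φ) = τ(1)·log r_σ(Φ)`, i.e.
`det_τ(Φ) = r_σ(Φ)^{τ(1)}`. -/
theorem logdet_eq_of_spectrum_on_circle
    (τ : A →ₗ[ℂ] ℂ) (hτpos : ∀ a : A, 0 ≤ τ (star a * a))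
    (hτtr : ∀ a b : A, τ (a * b) = τ (b * a))
    (u : Aˣ) (hν : ∀ n : ℤ, n ≠ 0 → τ (((u ^ n : Aˣ) : A)) = 0)
    (hr : spectralRadius ℂ ((u⁻¹ : Aˣ) : A) = (spectralRadius ℂ (u : A))⁻¹) :
    logdetTr τ (u : A) = (τ 1).re * Real.log (spectralRadius ℂ (u : A)).toReal ∧
      detTr τ (u : A) = (spectralRadius ℂ (u : A)).toReal ^ (τ 1).re := by
  let _ := CStarAlgebra.spectralOrder A
  have _ := CStarAlgebra.spectralOrderedRing A
  -- In the zero algebra both spectral radii are `0`, which contradicts `hr` since `0⁻¹ = ⊤`.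
  have hnt : Nontrivial A := by
    by_contra hA
    have := not_nontrivial_iff_subsingleton.1 hA
    simp at hr
  have hτ : ∀ a : A, 0 ≤ a → 0 ≤ τ a := by
    intro a ha
    obtain ⟨b, rfl⟩ := CStarAlgebra.nonneg_iff_eq_star_mul_self.1 ha
    exact hτpos b
  obtain ⟨C, hC⟩ := PositiveLinearMap.exists_norm_apply_le (PositiveLinearMap.mk₀ τ hτ)
  let L : A →L[ℝ] ℂ := (τ.restrictScalars ℝ).mkContinuous C hC
  have hLτ : ∀ a, L a = τ a := fun a => rfl
  have hL : ∀ a b : A, L (a * b) = L (b * a) := hτtr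
  have htop : ∀ v : Aˣ, spectralRadius ℂ (v : A) ≠ ⊤ := fun v =>
    ((spectrum.spectralRadius_le_nnnorm (v : A)).trans_lt ENNReal.coe_lt_top).ne
  have h0 : spectralRadius ℂ (u : A) ≠ 0 := fun h => htop u⁻¹ (by rw [hr, h, ENNReal.inv_zero])
  have h0' : spectralRadius ℂ (↑u⁻¹ : A) ≠ 0 := by
    rw [hr]; exact ENNReal.inv_ne_zero.2 (htop u)
  have h1 := logdetTr_le τ hτ L hLτ hL u h0 (htop u)
  have h2 := logdetTr_le τ hτ L hLτ hL u⁻¹ h0' (htop _)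
  have h3 : logdetTr τ (↑u⁻¹ : A) = -logdetTr τ (u : A) := by
    have := trace_log_inv L hL u
    rw [hLτ, hLτ] at this
    rw [logdetTr, logdetTr, this]; simp
  rw [h3, hr, ENNReal.toReal_inv, Real.log_inv] at h2
  have h4 : logdetTr τ (u : A) = (τ 1).re * Real.log (spectralRadius ℂ (u : A)).toReal := by
    linarith
  refine ⟨h4, ?_⟩
  rw [detTr, h4, Real.rpow_def_of_pos (ENNReal.toReal_pos h0 (htop u)), mul_comm]
end
end

section
/- For every invertible Φ ∈ M one has −τ(1)·log r_σ(Φ^{−1}) ≤ logdet_τ(Φ) ≤ τ(1)·log r_σ(Φ); in particular det_τ(Φ) ≤ r_σ(Φ)^{τ(1)}. -/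
/-!
Write `T = Re τ`, a bounded tracial functional with `0 ≤ T (star a * a)`.

The upper bound follows from Gelfand's formula once `logdet (Φ ^ n) = n * logdet Φ` is known:
`log a ≤ log ‖a‖` for strictly positive `a` gives `n * logdet Φ ≤ τ(1) * log ‖Φ ^ n‖`, and
`‖Φ ^ n‖ ^ (1 / n)` tends to the spectral radius. The lower bound is the upper bound for `Φ⁻¹`,
because `logdet Φ⁻¹ = -logdet Φ`. Both identities are instances of the multiplicativity
`T (log (Φ* y Φ)) = T (log y) + T (log (Φ* Φ))` (`trace_log_conj`).

Multiplicativity rests on a Klein inequality (`trace_klein`): for self-adjoint `p`, `q`,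
`T p - T q ≤ T (exp p * exp (-q)) - T 1`. Indeed `g t = T (exp (t p) * exp (-t q))` satisfies
`2 (g t - g 0) ≤ g (2 t) - g 0`, by positivity of `T` on `|z - 1|²` with
`z = exp (t p) * exp (-t q)`; iterating from `t = 2⁻ᵏ` to `t = 1` bounds the derivative
of `g` at `0`, which is `T p - T q`, by `g 1 - g 0`.
Applied in both directions along the path `exp (t h) * y * exp (t h)`, the inequality shows that
`T ∘ log` grows with constant speed `2 T h` (`trace_log_exp_conj`). This is multiplicativity for
`Φ = exp h`, and the polar decomposition of `Φ` reduces the general case to it.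
-/

open scoped ComplexOrder

noncomputable section

variable {A : Type*} [CStarAlgebra A]

open NormedSpace Filter Topology

section Helpers

/-! ### One-parameter groups and spectral radius -/

/-- If the increments of `F` are bounded by a function `G` of the step which has derivative `c` at
`0`, then `F 1 - F 0 ≤ c`: cut `[0, 1]` into `n` equal steps, so that
`F 1 - F 0 ≤ n * G (1 / n)`, which tends to `c`. -/
theorem le_deriv_of_sub_le {F G : ℝ → ℝ} {c : ℝ} (hFG : ∀ s t, F t - F s ≤ G (t - s))
    (hG0 : G 0 = 0) (hG : HasDerivAt G c 0) : F 1 - F 0 ≤ c := by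
  have hsum : ∀ (δ : ℝ) (k : ℕ), F (k * δ) - F 0 ≤ k * G δ := by
    intro δ k
    induction k with
    | zero => simp
    | succ k ih =>
      have h := hFG (k * δ) ((k + 1 : ℕ) * δ)
      have e : ((k + 1 : ℕ) : ℝ) * δ - k * δ = δ := by push_cast; ring
      rw [e] at h
      push_cast at h ⊢
      linarith
  have hn : Tendsto (fun n : ℕ => (1 / ((n : ℝ) + 1))) atTop (𝓝[≠] 0) :=
    tendsto_nhdsWithin_iff.2 ⟨tendsto_one_div_add_atTop_nhds_zero_nat,
      .of_forall fun n => by simp; positivity⟩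
  refine ge_of_tendsto ((hasDerivAt_iff_tendsto_slope.1 hG).comp hn) (.of_forall fun n => ?_)
  have h := hsum (1 / ((n : ℝ) + 1)) (n + 1)
  have e : ((n + 1 : ℕ) : ℝ) * (1 / ((n : ℝ) + 1)) = 1 := by push_cast; field_simp
  rw [e] at h
  simp only [Function.comp, slope_def_field, hG0, sub_zero, div_div_eq_mul_div, div_one]
  push_cast at h
  linarith

theorem star_exp_smul {h : A} (hh : IsSelfAdjoint h) (t : ℝ) :
    star (exp (t • h)) = exp (t • h) := by
  rw [star_exp, star_smul, hh.star_eq, star_trivial]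

theorem exp_add_smul (h : A) (s t : ℝ) : exp ((s + t) • h) = exp (s • h) * exp (t • h) := by
  let _ : NormedAlgebra ℚ A := .restrictScalars ℚ ℝ A
  rw [add_smul, exp_add_of_commute]
  exact ((Commute.refl h).smul_left s).smul_right t

theorem exp_smul_mul_exp_neg_smul (h : A) (t : ℝ) : exp (t • h) * exp ((-t) • h) = 1 := by
  rw [← exp_add_smul]; simp

theorem hasDerivAt_exp_smul_zero (h : A) : HasDerivAt (fun t : ℝ => exp (t • h)) h 0 := by
  simpa using hasDerivAt_exp_smul_const (𝕂 := ℝ) h 0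

theorem spectralRadius_toReal_pos [Nontrivial A] (u : Aˣ) :
    0 < (spectralRadius ℂ (u : A)).toReal := by
  obtain ⟨z, hz, hzr⟩ := spectrum.exists_nnnorm_eq_spectralRadius (u : A)
  rw [← hzr]
  simpa using spectrum.ne_zero_of_mem_of_unit hz

variable {T : A →L[ℝ] ℝ}

/-! ### Klein's inequality -/

/-- A form of Klein's inequality: with `x = exp p` and `y = exp q` it reads
`T (log x) - T (log y) ≤ T (x * y⁻¹) - T 1`. No commutation of `p` and `q` is needed. -/
theorem trace_klein (hpos : ∀ a : A, 0 ≤ T (star a * a)) (htr : ∀ a b : A, T (a * b) = T (b * a))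
    {p q : A} (hp : IsSelfAdjoint p) (hq : IsSelfAdjoint q) :
    T p - T q ≤ T (exp p * exp (-q)) - T 1 := by
  set g : ℝ → ℝ := fun t => T (exp (t • p) * exp (t • (-q))) with hg
  have hg0 : g 0 = T 1 := by simp [hg]
  have hder : HasDerivAt g (T p - T q) 0 := by
    have h := T.hasFDerivAt.comp_hasDerivAt (0 : ℝ)
      ((hasDerivAt_exp_smul_zero p).mul (hasDerivAt_exp_smul_zero (-q)))
    refine h.congr_deriv ?_
    simp [sub_eq_add_neg]
  -- Positivity of `T` on `star (z - 1) * (z - 1)` for `z = exp (t p) * exp (-t q)`; the trace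
  -- property identifies `T (star z)` with `T z` and `T (star z * z)` with `g (2 t)`.
  have hdouble : ∀ t : ℝ, 2 * (g t - T 1) ≤ g (t + t) - T 1 := by
    intro t
    simp only [hg, exp_add_smul]
    set c := exp (t • p) with hc
    set d := exp (t • (-q)) with hd
    have hcs : star c = c := star_exp_smul hp t
    have hds : star d = d := star_exp_smul hq.neg t
    have h := hpos (c * d - 1)
    have e : star (c * d - 1) * (c * d - 1) = d * (c * c * d) - d * c - c * d + 1 := by
      simp only [star_sub, star_mul, star_one, hcs, hds]; noncomm_ring
    rw [e, map_add, map_sub, map_sub, htr d (c * c * d), htr d c] at h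
    rw [← mul_assoc (c * c)]
    linarith
  have hpow : ∀ k : ℕ, 2 ^ k * (g ((1 / 2) ^ k) - T 1) ≤ g 1 - T 1 := by
    intro k
    induction k with
    | zero => simp
    | succ k ih =>
      have h := hdouble ((1 / 2) ^ (k + 1))
      have e : ((1 / 2 : ℝ)) ^ (k + 1) + (1 / 2) ^ (k + 1) = (1 / 2) ^ k := by ring
      rw [e] at h
      refine le_trans ?_ ih
      rw [pow_succ (2 : ℝ) k, mul_assoc]
      gcongr
  have hn : Tendsto (fun n : ℕ => (1 / 2 : ℝ) ^ n) atTop (𝓝[≠] 0) :=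
    tendsto_nhdsWithin_iff.2 ⟨tendsto_pow_atTop_nhds_zero_of_lt_one (by norm_num) (by norm_num),
      .of_forall fun n => by simp⟩
  have h1 : g 1 = T (exp p * exp (-q)) := by simp [hg]
  rw [← h1]
  refine le_of_tendsto ((hasDerivAt_iff_tendsto_slope.1 hder).comp hn) (.of_forall fun n => ?_)
  have h := hpow n
  simp only [Function.comp, slope_def_field, hg0, sub_zero]
  rw [div_eq_inv_mul, ← inv_pow]
  simpa using h

variable [PartialOrder A] [StarOrderedRing A]

/-! ### Multiplicativity of the determinant -/

theorem isStrictlyPositive_exp {q : A} (hq : IsSelfAdjoint q) : IsStrictlyPositive (exp q) := by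
  let _ : NormedAlgebra ℚ A := .restrictScalars ℚ ℝ A
  exact ⟨IsSelfAdjoint.exp_nonneg hq, isUnit_exp q⟩

/-- Multiplicativity for a self-adjoint exponential: along the path
`y t = exp (t h) * exp q * exp (t h)`, Klein's inequality bounds the increment of `T (log (y t))`
by a function of the step whose derivative at `0` is `2 * T h`; the reversed path gives the opposite
bound. -/
theorem trace_log_exp_conj (hpos : ∀ a : A, 0 ≤ T (star a * a))
    (htr : ∀ a b : A, T (a * b) = T (b * a))
    {q h : A} (hq : IsSelfAdjoint q) (hh : IsSelfAdjoint h) :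
    T (CFC.log (exp h * exp q * exp h)) = T q + 2 * T h := by
  let _ : NormedAlgebra ℚ A := .restrictScalars ℚ ℝ A
  have hqq : exp (-q) * exp q = 1 := by
    simpa using exp_smul_mul_exp_neg_smul (-q) 1
  have hqq' : exp q * exp (-q) = 1 := by
    simpa using exp_smul_mul_exp_neg_smul q 1
  set y : ℝ → A := fun t => exp (t • h) * exp q * exp (t • h) with hy
  set F : ℝ → ℝ := fun t => T (CFC.log (y t)) with hF
  set G : ℝ → ℝ := fun r => T (exp (r • h) * exp q * exp (r • h) * exp (-q)) - T 1 with hGdef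
  have hypos : ∀ t, IsStrictlyPositive (y t) := fun t => by
    have := (isUnit_exp (t • h)).isStrictlyPositive_star_left_conjugate_iff.2
      (isStrictlyPositive_exp hq)
    rwa [star_exp_smul hh] at this
  have hyexp : ∀ t, exp (CFC.log (y t)) = y t := fun t => CFC.exp_log _ (hypos t)
  have hyinv : ∀ t, exp (-CFC.log (y t)) = exp ((-t) • h) * exp (-q) * exp ((-t) • h) := by
    intro t
    have h1 : exp (-CFC.log (y t)) * y t = 1 := by
      simpa [hyexp t] using exp_smul_mul_exp_neg_smul (-CFC.log (y t)) 1
    have h2 : y t * (exp ((-t) • h) * exp (-q) * exp ((-t) • h)) = 1 := by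
      have e := exp_smul_mul_exp_neg_smul h t
      calc _ = exp (t • h) * (exp q * (exp (t • h) * exp ((-t) • h)) * exp (-q)) *
              exp ((-t) • h) := by simp only [hy, mul_assoc]
        _ = 1 := by rw [e, mul_one, hqq', mul_one, e]
    exact left_inv_eq_right_inv h1 h2
  have hFG : ∀ s t, F t - F s ≤ G (t - s) := by
    intro s t
    refine (trace_klein hpos htr (.log) (.log)).trans_eq ?_
    rw [hyexp, hyinv]
    simp only [hGdef, hy]
    congr 1
    -- The trace property moves the last factor `exp (-s h)` of `(y s)⁻¹` to the front, where it
    -- merges with `exp (t h)`; the bound then depends on `t - s` only.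
    rw [← mul_assoc, htr _ (exp ((-s) • h))]
    congr 1
    have e1 : exp ((t - s) • h) = exp ((-s) • h) * exp (t • h) := by
      rw [← exp_add_smul]; congr 2; ring
    have e2 : exp ((t - s) • h) = exp (t • h) * exp ((-s) • h) := by
      rw [← exp_add_smul]; congr 2
    calc _ = (exp ((-s) • h) * exp (t • h)) * exp q * (exp (t • h) * exp ((-s) • h)) *
            exp (-q) := by simp only [mul_assoc]
      _ = _ := by rw [← e1, ← e2]
  have hG0 : G 0 = 0 := by simp [hGdef, hqq']
  have hder : HasDerivAt G (2 * T h) 0 := by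
    have d := hasDerivAt_exp_smul_zero h
    have h1 := (T.hasFDerivAt.comp_hasDerivAt (0 : ℝ)
      (((d.mul_const (exp q)).mul d).mul_const (exp (-q)))).sub_const (T 1)
    refine h1.congr_deriv ?_
    simp only [zero_smul, exp_zero, mul_one, one_mul, add_mul, map_add]
    rw [mul_assoc, hqq', mul_one, htr (exp q * h), ← mul_assoc, hqq, one_mul]
    ring
  have hle := le_deriv_of_sub_le hFG hG0 hder
  -- The path run backwards.
  have hge := le_deriv_of_sub_le (F := fun t => F (1 - t)) (G := fun t => G (-t))
    (c := -(2 * T h))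
    (fun s t => by
      have := hFG (1 - s) (1 - t)
      rwa [show (1 - t) - (1 - s) = -(t - s) by ring] at this)
    (by simpa using hG0)
    (by
      have h0 : HasDerivAt G (2 * T h) (-0) := by simpa using hder
      exact (h0.comp (0 : ℝ) (hasDerivAt_neg (0 : ℝ))).congr_deriv (by ring))
  have hF0 : F 0 = T q := by simp [hF, hy, CFC.log_exp q hq]
  have hF1 : F 1 = T (CFC.log (exp h * exp q * exp h)) := by simp [hF, hy]
  simp only [sub_self, sub_zero] at hge
  linarith

theorem isStrictlyPositive_star_mul_self (u : Aˣ) : IsStrictlyPositive (star (u : A) * u) := by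
  simpa using u.isUnit.isStrictlyPositive_star_left_conjugate_iff.2 (isStrictlyPositive_one (A := A))

/-- Multiplicativity of the tracial determinant, in the form
`T (log (Φ* y Φ)) = T (log y) + T (log (Φ* Φ))`. -/
theorem trace_log_conj_s17 (hpos : ∀ a : A, 0 ≤ T (star a * a))
    (htr : ∀ a b : A, T (a * b) = T (b * a)) (u : Aˣ) {y : A} (hy : IsStrictlyPositive y) :
    T (CFC.log (star (u : A) * y * u)) = T (CFC.log y) + T (CFC.log (star (u : A) * u)) := by
  let _ : NormedAlgebra ℚ A := .restrictScalars ℚ ℝ A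
  have hS := isStrictlyPositive_star_mul_self u
  -- Polar decomposition `u = w * exp h`, with `exp h = |u|` and `w` unitary.
  set h : A := (1 / 2 : ℝ) • CFC.log (star (u : A) * u) with hh_def
  have hh : IsSelfAdjoint h := (IsSelfAdjoint.all (1 / 2 : ℝ)).smul .log
  have hcc : exp h * exp h = star (u : A) * u := by
    rw [hh_def, ← exp_add_smul]
    norm_num
    exact CFC.exp_log _ hS
  have hc1 : exp h * exp (-h) = 1 := by simpa using exp_smul_mul_exp_neg_smul h 1
  have hc2 : exp (-h) * exp h = 1 := by simpa using exp_smul_mul_exp_neg_smul (-h) 1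
  have hcs : star (exp (-h)) = exp (-h) := by simpa using star_exp_smul hh.neg 1
  set w : Aˣ := u * ⟨exp (-h), exp h, hc2, hc1⟩ with hw
  have hwv : (w : A) = u * exp (-h) := rfl
  have hsw : star (w : A) = ((w⁻¹ : Aˣ) : A) := by
    refine (Units.inv_eq_of_mul_eq_one_left ?_).symm
    rw [hwv, star_mul, hcs]
    calc _ = exp (-h) * (star (u : A) * u) * exp (-h) := by simp only [mul_assoc]
      _ = (exp (-h) * exp h) * (exp h * exp (-h)) := by rw [← hcc]; simp only [mul_assoc]
      _ = 1 := by rw [hc1, hc2, one_mul]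
  have huw : (u : A) = w * exp h := by rw [hwv, mul_assoc, hc2, mul_one]
  have hsu : star (u : A) = exp h * star (w : A) := by
    rw [huw, star_mul]; congr 1; simpa using star_exp_smul hh 1
  -- Conjugation by `w` commutes with `exp` and is invisible to `T`.
  set q : A := ((w⁻¹ : Aˣ) : A) * CFC.log y * w with hq_def
  have hq : IsSelfAdjoint q := by
    rw [hq_def, ← hsw]; exact IsSelfAdjoint.log.conjugate' _
  have hqexp : exp q = star (w : A) * y * w := by
    rw [hq_def, exp_units_conj', CFC.exp_log y hy, hsw]
  have hTq : T q = T (CFC.log y) := by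
    rw [hq_def, htr, ← mul_assoc, Units.mul_inv, one_mul]
  have hTh : T (CFC.log (star (u : A) * u)) = 2 * T h := by
    rw [hh_def, map_smul, smul_eq_mul]; ring
  rw [hTh, ← hTq, ← trace_log_exp_conj hpos htr hq hh, hqexp, hsu]
  congr 2
  rw [huw]
  simp only [mul_assoc]

/-! ### Powers, inverses and Gelfand's formula -/

theorem trace_log_pow_s17 (hpos : ∀ a : A, 0 ≤ T (star a * a))
    (htr : ∀ a b : A, T (a * b) = T (b * a)) (u : Aˣ) (n : ℕ) :
    T (CFC.log (star ((u : A) ^ n) * (u : A) ^ n)) = n * T (CFC.log (star (u : A) * u)) := by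
  induction n with
  | zero => simp
  | succ n ih =>
    have h := trace_log_conj_s17 hpos htr u (isStrictlyPositive_star_mul_self (u ^ n))
    rw [Units.val_pow_eq_pow_val, ih] at h
    rw [pow_succ, star_mul]
    simp only [mul_assoc] at h ⊢
    rw [h]; push_cast; ring

theorem trace_log_inv_s17 (hpos : ∀ a : A, 0 ≤ T (star a * a))
    (htr : ∀ a b : A, T (a * b) = T (b * a)) (u : Aˣ) :
    T (CFC.log (star ((u⁻¹ : Aˣ) : A) * ((u⁻¹ : Aˣ) : A))) =
      -T (CFC.log (star (u : A) * u)) := by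
  have h := trace_log_conj_s17 hpos htr u⁻¹ (isStrictlyPositive_star_mul_self u)
  have e : star ((u⁻¹ : Aˣ) : A) * (star (u : A) * u) * ((u⁻¹ : Aˣ) : A) = 1 := by
    rw [mul_assoc, mul_assoc, Units.mul_inv, mul_one, ← star_mul, Units.mul_inv, star_one]
  rw [e, CFC.log_one, map_zero] at h
  linarith

theorem trace_log_le (hpos : ∀ a : A, 0 ≤ T (star a * a)) {a : A} (ha : IsStrictlyPositive a) :
    T (CFC.log a) ≤ T 1 * Real.log ‖a‖ := by
  rcases subsingleton_or_nontrivial A with hA | hA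
  · rw [Subsingleton.elim (CFC.log a) 0, Subsingleton.elim (1 : A) 0]
    simp
  have h1 : CFC.log a ≤ algebraMap ℝ A (Real.log ‖a‖) := by
    refine cfc_le_algebraMap _ _ _ (fun x hx => ?_) ?_ ha.isSelfAdjoint
    · have hx0 : 0 < x := ha.spectrum_pos hx
      refine Real.log_le_log hx0 ?_
      exact (Real.le_norm_self x).trans (spectrum.norm_le_norm_of_mem hx)
    · exact Real.continuousOn_log.mono fun x hx => (ha.spectrum_pos hx).ne'
  obtain ⟨b, hb⟩ := CStarAlgebra.nonneg_iff_eq_star_mul_self.1 (sub_nonneg.2 h1)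
  have h2 := hpos b
  rw [← hb, map_sub, Algebra.algebraMap_eq_smul_one, map_smul, smul_eq_mul] at h2
  linarith

/-- The upper bound `logdet Φ ≤ τ(1) * log r(Φ)`, with `T = Re τ`. -/
theorem half_trace_log_le (hpos : ∀ a : A, 0 ≤ T (star a * a))
    (htr : ∀ a b : A, T (a * b) = T (b * a)) (u : Aˣ) :
    (1 / 2) * T (CFC.log (star (u : A) * u)) ≤
      T 1 * Real.log (spectralRadius ℂ (u : A)).toReal := by
  rcases subsingleton_or_nontrivial A with hA | hA
  · rw [Subsingleton.elim (CFC.log _) (0 : A), Subsingleton.elim (1 : A) 0]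
    simp
  have hr := spectralRadius_toReal_pos u
  have hfin : spectralRadius ℂ (u : A) ≠ ⊤ := fun h => by simp [h] at hr
  have hlim : Tendsto (fun n : ℕ => ‖(u : A) ^ n‖ ^ (1 / n : ℝ)) atTop
      (𝓝 (spectralRadius ℂ (u : A)).toReal) := by
    have h := (ENNReal.tendsto_toReal hfin).comp
      (spectrum.pow_norm_pow_one_div_tendsto_nhds_spectralRadius (u : A))
    refine h.congr fun n => ?_
    simp only [Function.comp]
    exact ENNReal.toReal_ofReal (by positivity)
  refine ge_of_tendsto ((hlim.log hr.ne').const_mul (T 1)) ?_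
  filter_upwards [eventually_ge_atTop 1] with n hn
  have hn0 : (0 : ℝ) < n := by exact_mod_cast hn
  have hnorm : 0 < ‖(u : A) ^ n‖ := by
    rw [← Units.val_pow_eq_pow_val]; exact norm_pos_iff.2 (u ^ n).ne_zero
  have h := trace_log_le hpos (isStrictlyPositive_star_mul_self (u ^ n))
  rw [Units.val_pow_eq_pow_val, trace_log_pow_s17 hpos htr, CStarRing.norm_star_mul_self,
    Real.log_mul hnorm.ne' hnorm.ne'] at h
  rw [Real.log_rpow hnorm]
  have e : T 1 * (1 / (n : ℝ) * Real.log ‖(u : A) ^ n‖) =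
    (T 1 * (Real.log ‖(u : A) ^ n‖ + Real.log ‖(u : A) ^ n‖)) / n / 2 := by ring
  rw [e, le_div_iff₀ two_pos, le_div_iff₀ hn0]
  linarith

end Helpers

/-- For every invertible `Φ`,
`−τ(1)·log r_σ(Φ⁻¹) ≤ logdet_τ(Φ) ≤ τ(1)·log r_σ(Φ)`; in particular
`det_τ(Φ) ≤ r_σ(Φ)^{τ(1)}`. -/
theorem logdet_le_spectralRadius
    (τ : A →ₗ[ℂ] ℂ) (hτpos : ∀ a : A, 0 ≤ τ (star a * a))
    (hτtr : ∀ a b : A, τ (a * b) = τ (b * a))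
    (u : Aˣ) :
    -((τ 1).re * Real.log (spectralRadius ℂ ((u⁻¹ : Aˣ) : A)).toReal) ≤ logdetTr τ (u : A) ∧
      logdetTr τ (u : A) ≤ (τ 1).re * Real.log (spectralRadius ℂ (u : A)).toReal ∧
      detTr τ (u : A) ≤ (spectralRadius ℂ (u : A)).toReal ^ (τ 1).re := by
  let : PartialOrder A := CStarAlgebra.spectralOrder A
  have : StarOrderedRing A := CStarAlgebra.spectralOrderedRing A
  let P : A →ₚ[ℂ] ℂ := PositiveLinearMap.mk₀ τ fun a ha => by
    obtain ⟨b, rfl⟩ := CStarAlgebra.nonneg_iff_eq_star_mul_self.1 ha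
    exact hτpos b
  have hcont : Continuous τ := map_continuous P
  let T : A →L[ℝ] ℝ := Complex.reCLM.comp ((⟨τ, hcont⟩ : A →L[ℂ] ℂ).restrictScalars ℝ)
  have hT : ∀ a, T a = (τ a).re := fun _ => rfl
  have hpos : ∀ a : A, 0 ≤ T (star a * a) := fun a => (Complex.le_def.1 (hτpos a)).1
  have htr : ∀ a b : A, T (a * b) = T (b * a) := fun a b => by rw [hT, hT, hτtr]
  have hlog : ∀ v : Aˣ, logdetTr τ (v : A) = (1 / 2) * T (CFC.log (star (v : A) * v)) :=
    fun _ => rfl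
  have hup : ∀ v : Aˣ,
      logdetTr τ (v : A) ≤ (τ 1).re * Real.log (spectralRadius ℂ (v : A)).toReal :=
    fun v => half_trace_log_le hpos htr v
  refine ⟨?_, hup u, ?_⟩
  · have h := hup u⁻¹
    rw [hlog, trace_log_inv_s17 hpos htr] at h
    rw [hlog]
    linarith
  -- In the zero algebra `r = 0` and `τ 1 = 0`, so the claim is `exp 0 ≤ 0 ^ 0 = 1`.
  · rcases subsingleton_or_nontrivial A with hA | hA
    · have h1 : (1 : A) = 0 := Subsingleton.elim _ _
      have h2 : cfc Real.log (star (u : A) * u) = 0 := Subsingleton.elim _ _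
      simp [detTr, logdetTr, h1, h2]
    · rw [detTr, Real.rpow_def_of_pos (spectralRadius_toReal_pos u), mul_comm]
      exact Real.exp_le_exp.2 (hup u)
end
end
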